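/- A λ-term M is solvable if and only if M is head-normalizable. -/

import Mathlib

/-! Ordinary λ-terms, in de Bruijn notation. -/
inductive Lam : Type
  | var : ℕ → Lam
  | lam : Lam → Lam
  | app : Lam → Lam → Lam
  deriving DecidableEq

namespace Lam

/-- Shift the free indices `≥ d` up by one. -/
def lift (d : ℕ) : Lam → Lam
  | var n => if n < d then var n else var (n + 1)
  | lam M => lam (lift (d + 1) M)
  | app P Q => app (lift d P) (lift d Q)

/-- Capture-avoiding substitution of `N` for the free variable `k`. -/
def subst : Lam → ℕ → Lam → Lam
  | var n, k, N => if n = k then N else if k < n then var (n - 1) else var n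
  | lam M, k, N => lam (subst M (k + 1) (lift 0 N))
  | app P Q, k, N => app (subst P k N) (subst Q k N)

/-- Number of free occurrences of the variable `k`. -/
def count (k : ℕ) : Lam → ℕ
  | var n => if n = k then 1 else 0
  | lam M => count (k + 1) M
  | app P Q => count k P + count k Q

/-- One-step β-reduction. -/
inductive Beta : Lam → Lam → Prop
  | beta (M N : Lam) : Beta (app (lam M) N) (subst M 0 N)
  | lam {M M'} : Beta M M' → Beta (lam M) (lam M')
  | appL {P P' Q} : Beta P P' → Beta (app P Q) (app P' Q)
  | appR {P Q Q'} : Beta Q Q' → Beta (app P Q) (app P Q')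

/-- The head of the application spine is a variable, with no λ on the spine. -/
def neutral : Lam → Bool
  | var _ => true
  | lam _ => false
  | app P _ => neutral P

/-- Head-normal forms: `λx₁…λxₘ. x N₁ … Nₙ`. -/
def isHNF : Lam → Prop
  | var _ => True
  | lam M => isHNF M
  | app P _ => neutral P = true

/-- The head-reduction function `H`: contracts the head redex, identity on head-normal
forms. -/
def H : Lam → Lam
  | var n => var n
  | lam M => lam (H M)
  | app (lam P) Q => subst P 0 Q
  | app (var n) Q => app (var n) Q
  | app (app P₁ P₂) Q => app (H (app P₁ P₂)) Q

/-- The left-parallel reduction function `L`: identity on β-normal forms, propagated to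
the arguments on head-normal forms, contraction of the head redex otherwise. -/
def L : Lam → Lam
  | var n => var n
  | lam M => lam (L M)
  | app (lam P) Q => subst P 0 Q
  | app (var n) Q => app (var n) (L Q)
  | app (app P₁ P₂) Q =>
      if neutral (app P₁ P₂) then app (L (app P₁ P₂)) (L Q)
      else app (L (app P₁ P₂)) Q

/-- Iterated application `M N₁ … Nₙ`. -/
def mkApps (M : Lam) (Ns : List Lam) : Lam := Ns.foldl app M

/-- All free variables are `< d`. -/
def ClosedAt (d : ℕ) : Lam → Prop
  | var n => n < d
  | lam M => ClosedAt (d + 1) M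
  | app P Q => ClosedAt d P ∧ ClosedAt d Q

/-- `M` is head-normalizable: it β-reduces in finitely many steps to a head-normal form. -/
def HeadNormalizable (M : Lam) : Prop :=
  ∃ N, Relation.ReflTransGen Beta M N ∧ isHNF N

/-- `M` is a β-normal form: it contains no β-redex, i.e. admits no β-step. -/
def BetaNF (M : Lam) : Prop := ¬∃ N, Beta M N

/-- `M` is β-normalizable: it β-reduces in finitely many steps to a β-normal form. -/
def BetaNormalizable (M : Lam) : Prop :=
  ∃ N, Relation.ReflTransGen Beta M N ∧ BetaNF N

/-- `M` is strongly β-normalizable: no infinite β-reduction sequence starts from `M`. -/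
def StronglyNormalizable (M : Lam) : Prop := Acc (fun N M' => Beta M' N) M

end Lam

/-! Rigid resource terms (the nonzero ones), in de Bruijn notation:
`a ::= x | λx.a | ⟨c⟩d⃗` with `d⃗` a list of rigid terms.
The term `0` is represented by `none : Option Rig`. -/
inductive Rig : Type
  | var : ℕ → Rig
  | lam : Rig → Rig
  | app : Rig → List Rig → Rig

namespace Rig

mutual
/-- Number of free occurrences of the variable `k` in a rigid term. -/
def countR (k : ℕ) : Rig → ℕ
  | var n => if n = k then 1 else 0
  | lam a => countR (k + 1) a
  | app c ds => countR k c + countRList k ds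
termination_by a => sizeOf a

def countRList (k : ℕ) : List Rig → ℕ
  | [] => 0
  | d :: ds => countR k d + countRList k ds
termination_by ds => sizeOf ds
end

mutual
/-- Shift the free indices `≥ d` up by one. -/
def liftR (d : ℕ) : Rig → Rig
  | var n => if n < d then var n else var (n + 1)
  | lam a => lam (liftR (d + 1) a)
  | app c ds => app (liftR d c) (liftRList d ds)
termination_by a => sizeOf a

def liftRList (d : ℕ) : List Rig → List Rig
  | [] => []
  | a :: as => liftR d a :: liftRList d as
termination_by as => sizeOf as
end

mutual
/-- Rigid substitution `a[b⃗/k]`: the list `b⃗` is distributed, in order, over the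
free occurrences of the variable `k`; the result is `none` (i.e. `0`) when
`|b⃗| ≠ n_k(a)`. -/
def rsubst (k : ℕ) : Rig → List Rig → Option Rig
  | var n, bs =>
      if n = k then (match bs with | [b] => some b | _ => none)
      else (match bs with
            | [] => some (if k < n then var (n - 1) else var n)
            | _ => none)
  | lam a, bs => (rsubst (k + 1) a (liftRList 0 bs)).map lam
  | app c ds, bs =>
      match rsubst k c (bs.take (countR k c)), rsubstList k ds (bs.drop (countR k c)) with
      | some c', some ds' => some (app c' ds')
      | _, _ => none
termination_by a _ => sizeOf a

def rsubstList (k : ℕ) : List Rig → List Rig → Option (List Rig)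
  | [], bs => if bs.isEmpty then some [] else none
  | d :: ds, bs =>
      match rsubst k d (bs.take (countR k d)), rsubstList k ds (bs.drop (countR k d)) with
      | some d', some ds' => some (d' :: ds')
      | _, _ => none
termination_by ds _ => sizeOf ds
end

/-- One-step rigid resource reduction `→_r` (contextual closure of
`⟨λx.a⟩b⃗ →_r a[b⃗/x]`); the result may be `0` (i.e. `none`), which annihilates
the surrounding context. -/
inductive RStep : Rig → Option Rig → Prop
  | beta (a : Rig) (bs : List Rig) : RStep (app (lam a) bs) (rsubst 0 a bs)
  | lam {a r} : RStep a r → RStep (lam a) (r.map lam)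
  | head {c r} (ds : List Rig) : RStep c r → RStep (app c ds) (r.map (fun c' => app c' ds))
  | arg {d r} (c : Rig) (ds₁ ds₂ : List Rig) :
      RStep d r → RStep (app c (ds₁ ++ d :: ds₂)) (r.map (fun d' => app c (ds₁ ++ d' :: ds₂)))

/-- `→_r` on rigid terms extended with `0`; `0` is inert. -/
inductive RStepO : Option Rig → Option Rig → Prop
  | mk {a r} : RStep a r → RStepO (some a) r

/-- `r` is a `→_r`-normal form (`0` is one). -/
def RNormal (r : Option Rig) : Prop := ¬∃ r', RStepO r r'

/-- The head of the application spine is a variable, with no λ on the spine. -/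
def rNeutral : Rig → Bool
  | var _ => true
  | lam _ => false
  | app c _ => rNeutral c

/-- Rigid head-normal forms among nonzero terms: `λx₁…λxₘ.⟨…⟨x⟩d⃗₁…⟩d⃗ₙ`
(the term `0` is a head-normal form, but it is treated separately). -/
def rIsHNF : Rig → Prop
  | var _ => True
  | lam a => rIsHNF a
  | app c _ => rNeutral c = true

/-- The rigid head-reduction function `H_r`: contracts the head redex, identity on
head-normal forms; the result may be `0` (i.e. `none`). -/
def Hr : Rig → Option Rig
  | var n => some (var n)
  | lam a => (Hr a).map lam
  | app (lam a) bs => rsubst 0 a bs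
  | app (var n) ds => some (app (var n) ds)
  | app (app c₁ c₂) ds => (Hr (app c₁ c₂)).map (fun c' => app c' ds)

/-- `H_r` extended to terms-or-`0`. -/
def HrO : Option Rig → Option Rig := fun r => r.bind Hr

mutual
/-- The rigid left-parallel reduction function `L_r`: identity on `→_r`-normal forms,
applied componentwise to the argument lists on head-normal forms, contraction of the
head redex otherwise; the result may be `0` (i.e. `none`). -/
def Lr : Rig → Option Rig
  | var n => some (var n)
  | lam a => (Lr a).map lam
  | app (lam a) bs => rsubst 0 a bs
  | app (var n) ds => (LrList ds).map (fun ds' => app (var n) ds')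
  | app (app c₁ c₂) ds =>
      if rNeutral (app c₁ c₂) then
        match Lr (app c₁ c₂), LrList ds with
        | some c', some ds' => some (app c' ds')
        | _, _ => none
      else (Lr (app c₁ c₂)).map (fun c' => app c' ds)
termination_by a => sizeOf a

def LrList : List Rig → Option (List Rig)
  | [] => some []
  | d :: ds =>
      match Lr d, LrList ds with
      | some d', some ds' => some (d' :: ds')
      | _, _ => none
termination_by ds => sizeOf ds
end

/-- `L_r` extended to terms-or-`0`. -/
def LrO : Option Rig → Option Rig := fun r => r.bind Lr

/-- Positive resource terms: no empty list/multiset occurs as the argument of an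
application. -/
inductive rPositive : Rig → Prop
  | var (n : ℕ) : rPositive (var n)
  | lam {a} : rPositive a → rPositive (lam a)
  | app {c : Rig} {ds : List Rig} :
      rPositive c → ds ≠ [] → (∀ d ∈ ds, rPositive d) → rPositive (app c ds)

end Rig

/-- The rigid expansion `T_r(M)` of a λ-term (equivalently, the support of its Taylor
expansion, with multisets presented by lists: `Texp M` is closed under permutation of
argument lists). -/
def Texp : Lam → Set Rig
  | Lam.var n => {Rig.var n}
  | Lam.lam M => {a | ∃ b ∈ Texp M, a = Rig.lam b}
  | Lam.app P Q => {a | ∃ c ∈ Texp P, ∃ ds : List Rig, (∀ d ∈ ds, d ∈ Texp Q) ∧ a = Rig.app c ds}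

namespace Rig

/-- The support of the `n`-linear substitution `∂_k a · b̄`, where the multiset `b̄` is
presented by the list `bs`: the finite formal sum (multiset) of all nonzero results of
rigid substitutions along bijective assignments, i.e. permutations of `bs`. -/
def permSubst (k : ℕ) (a : Rig) (bs : List Rig) : Multiset Rig :=
  ↑(bs.permutations.filterMap (fun bs' => rsubst k a bs'))

/-- One step of non-erasing ε-resource reduction `→^{¬e}_{∂ε}` out of a single resource
term, producing a finite formal sum (a multiset) of resource terms: non-erasing resource
β-steps `⟨λx.a⟩b̄ → ∂_x a · b̄` (with `x ∈ FV(a)`) and resource σ₁-steps, under any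
context. -/
inductive NEStep : Rig → Multiset Rig → Prop
  | beta {a : Rig} (bs : List Rig) :
      0 < countR 0 a → NEStep (app (lam a) bs) (permSubst 0 a bs)
  | sigma (a : Rig) (ts qs : List Rig) :
      NEStep (app (app (lam a) ts) qs) {app (lam (app a (liftRList 0 qs))) ts}
  | lam {a σ} : NEStep a σ → NEStep (lam a) (σ.map lam)
  | head {c σ} (ds : List Rig) : NEStep c σ → NEStep (app c ds) (σ.map (fun c' => app c' ds))
  | arg {d σ} (c : Rig) (ds₁ ds₂ : List Rig) :
      NEStep d σ → NEStep (app c (ds₁ ++ d :: ds₂)) (σ.map (fun d' => app c (ds₁ ++ d' :: ds₂)))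

/-- Non-erasing ε-resource reduction on finite formal sums, extended by linearity. -/
def NEStepSum (σ τ : Multiset Rig) : Prop :=
  ∃ (a : Rig) (ρ υ : Multiset Rig), σ = a ::ₘ ρ ∧ NEStep a υ ∧ τ = υ + ρ

/-- `σ` is a `→^{¬e}_{∂ε}`-normal form. -/
def NENormal (σ : Multiset Rig) : Prop := ¬∃ τ, NEStepSum σ τ

end Rig

/-- One step of non-erasing ε-reduction on λ-terms: non-erasing β-steps
`(λx.M)N → M[N/x]` (with `x ∈ FV(M)`) together with σ₁-steps
`((λx.M)N)P → (λx.MP)N` (`x ∉ FV(P)`), under any context. -/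
inductive NEeps : Lam → Lam → Prop
  | beta {M : Lam} (N : Lam) :
      0 < Lam.count 0 M → NEeps (Lam.app (Lam.lam M) N) (Lam.subst M 0 N)
  | sigma (M N P : Lam) :
      NEeps (Lam.app (Lam.app (Lam.lam M) N) P)
        (Lam.app (Lam.lam (Lam.app M (Lam.lift 0 P))) N)
  | lam {M M'} : NEeps M M' → NEeps (Lam.lam M) (Lam.lam M')
  | appL {P P' Q} : NEeps P P' → NEeps (Lam.app P Q) (Lam.app P' Q)
  | appR {P Q Q'} : NEeps Q Q' → NEeps (Lam.app P Q) (Lam.app P Q')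

/-- The set `S` of λ-terms. -/
inductive SLam : Lam → Prop
  | varApp (n : ℕ) (Ms : List Lam) :
      (∀ M ∈ Ms, SLam M) → SLam (Lam.mkApps (Lam.var n) Ms)
  | lam {M} : SLam M → SLam (Lam.lam M)
  | redex (M₀ M₁ : Lam) (Ms : List Lam) :
      SLam M₁ → SLam (Lam.mkApps (Lam.subst M₀ 0 M₁) Ms) →
      SLam (Lam.mkApps (Lam.app (Lam.lam M₀) M₁) Ms)

/-- λI-terms: every abstraction binds a variable occurring free in its body. -/
def LamI : Lam → Prop
  | Lam.var _ => True
  | Lam.lam M => LamI M ∧ 0 < Lam.count 0 M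
  | Lam.app P Q => LamI P ∧ LamI Q

/-- The identity λ-term `λx.x`. -/
def Lam.Ident : Lam := Lam.lam (Lam.var 0)

/-- A closed λ-term `M` is solvable if `M N₁ ⋯ Nₙ =_β λx.x` for some `N₁, …, Nₙ`. -/
def Lam.SolvableClosed (M : Lam) : Prop :=
  ∃ Ns : List Lam, Relation.EqvGen Lam.Beta (Lam.mkApps M Ns) Lam.Ident

/-- A λ-term `M` is solvable if some closure of `M` (obtained by abstracting its free
variables) is solvable. -/
def Lam.Solvable (M : Lam) : Prop :=
  ∃ k : ℕ, Lam.ClosedAt 0 (Lam.lam^[k] M) ∧ Lam.SolvableClosed (Lam.lam^[k] M)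

/-!
A head-normalizable term is solvable because a head-normal form `λx₁…λxₘ. x N₁ … Nₙ`, with enough
further abstractions in front to bind `x`, reduces to `λx.x` once every abstraction is fed the term
`λy₁…λyₙ.λx.x`: that term ends up in head position and discards all the arguments `Nᵢ`.

For the converse, interpret terms in a graph model whose points are intersection types. Convertible
terms have the same interpretation. If `M N₁ ⋯ Nₙ =_β λx.x`, then `M N₁ ⋯ Nₙ` has a type because
`λx.x` has one, and hence so does `M`. A realizability argument shows that a term which has a type
is head-normalizable.
-/

namespace Lam

open Relation Set

/-! ### Simultaneous substitution -/

/-- The stream `x, f 0, f 1, …`: the environment `f` extended by a value `x` for the de Bruijn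
index `0`. -/
def scons {α : Type*} (x : α) (f : ℕ → α) : ℕ → α
  | 0 => x
  | n + 1 => f n

theorem comp_scons {α β : Type*} (g : α → β) (x : α) (f : ℕ → α) :
    g ∘ scons x f = scons (g x) (g ∘ f) := by
  funext n
  cases n <;> rfl

theorem scons_le_scons {α : Type*} [LE α] {x y : α} {f g : ℕ → α} (hxy : x ≤ y) (hfg : f ≤ g) :
    scons x f ≤ scons y g
  | 0 => hxy
  | n + 1 => hfg n

/-- The renaming `ξ` carried under a binder. -/
def upRen (ξ : ℕ → ℕ) : ℕ → ℕ := scons 0 (Nat.succ ∘ ξ)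

/-- Renaming of the free variables along `ξ`. -/
def rename : (ℕ → ℕ) → Lam → Lam
  | ξ, var n => var (ξ n)
  | ξ, lam M => lam (rename (upRen ξ) M)
  | ξ, app P Q => app (rename ξ P) (rename ξ Q)

/-- The simultaneous substitution `σ` carried under a binder. -/
def upSubst (σ : ℕ → Lam) : ℕ → Lam := scons (var 0) (rename Nat.succ ∘ σ)

/-- Simultaneous capture-avoiding substitution of `σ n` for every free variable `n`. -/
def psubst : (ℕ → Lam) → Lam → Lam
  | σ, var n => σ n
  | σ, lam M => lam (psubst (upSubst σ) M)
  | σ, app P Q => app (psubst σ P) (psubst σ Q)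

theorem upRen_comp_upRen (ξ ζ : ℕ → ℕ) : upRen ξ ∘ upRen ζ = upRen (ξ ∘ ζ) :=
  comp_scons _ _ _

theorem upSubst_comp_upRen (σ : ℕ → Lam) (ξ : ℕ → ℕ) :
    upSubst σ ∘ upRen ξ = upSubst (σ ∘ ξ) :=
  comp_scons _ _ _

theorem upSubst_var : upSubst var = var := by
  funext n
  cases n <;> rfl

theorem rename_rename (ξ ζ : ℕ → ℕ) (M : Lam) :
    rename ξ (rename ζ M) = rename (ξ ∘ ζ) M := by
  induction M generalizing ξ ζ with
  | var n => rfl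
  | lam M ih => simp only [rename, ih, upRen_comp_upRen]
  | app P Q ihP ihQ => simp only [rename, ihP, ihQ]

theorem upRen_id : upRen id = id := by
  funext n
  cases n <;> rfl

theorem rename_id (M : Lam) : rename id M = M := by
  induction M with
  | var n => rfl
  | lam M ih => rw [rename, upRen_id, ih]
  | app P Q ihP ihQ => rw [rename, ihP, ihQ]

theorem psubst_rename (σ : ℕ → Lam) (ξ : ℕ → ℕ) (M : Lam) :
    psubst σ (rename ξ M) = psubst (σ ∘ ξ) M := by
  induction M generalizing σ ξ with
  | var n => rfl
  | lam M ih => simp only [rename, psubst, ih, upSubst_comp_upRen]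
  | app P Q ihP ihQ => simp only [rename, psubst, ihP, ihQ]

theorem rename_upRen_comp_upSubst (ξ : ℕ → ℕ) (σ : ℕ → Lam) :
    rename (upRen ξ) ∘ upSubst σ = upSubst (rename ξ ∘ σ) := by
  funext n
  cases n with
  | zero => rfl
  | succ n => simp only [upSubst, scons, Function.comp_apply, rename_rename]; rfl

theorem rename_psubst (ξ : ℕ → ℕ) (σ : ℕ → Lam) (M : Lam) :
    rename ξ (psubst σ M) = psubst (rename ξ ∘ σ) M := by
  induction M generalizing ξ σ with
  | var n => rfl
  | lam M ih => simp only [rename, psubst, ih, rename_upRen_comp_upSubst]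
  | app P Q ihP ihQ => simp only [rename, psubst, ihP, ihQ]

theorem psubst_upSubst_comp_upSubst (σ τ : ℕ → Lam) :
    psubst (upSubst σ) ∘ upSubst τ = upSubst (psubst σ ∘ τ) := by
  funext n
  cases n with
  | zero => rfl
  | succ n => simp only [upSubst, scons, Function.comp_apply, psubst_rename, rename_psubst]; rfl

theorem psubst_psubst (σ τ : ℕ → Lam) (M : Lam) :
    psubst σ (psubst τ M) = psubst (psubst σ ∘ τ) M := by
  induction M generalizing σ τ with
  | var n => rfl
  | lam M ih => simp only [psubst, ih, psubst_upSubst_comp_upSubst]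
  | app P Q ihP ihQ => simp only [psubst, ihP, ihQ]

theorem psubst_var (M : Lam) : psubst var M = M := by
  induction M with
  | var n => rfl
  | lam M ih => simp only [psubst, upSubst_var, ih]
  | app P Q ihP ihQ => simp only [psubst, ihP, ihQ]

theorem lift_eq_rename (d : ℕ) (M : Lam) :
    lift d M = rename (fun n => if n < d then n else n + 1) M := by
  induction M generalizing d with
  | var n => simp only [lift, rename]; split <;> rfl
  | lam M ih =>
    simp only [lift, rename, ih]
    congr 2
    funext n
    cases n with
    | zero => simp [upRen, scons]
    | succ n => simp only [upRen, scons, Function.comp_apply]; grind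
  | app P Q ihP ihQ => simp only [lift, rename, ihP, ihQ]

theorem lift_zero (M : Lam) : lift 0 M = rename Nat.succ M := by
  simpa using lift_eq_rename 0 M

theorem subst_eq_psubst (M : Lam) (k : ℕ) (N : Lam) :
    subst M k N =
      psubst (fun n => if n = k then N else if k < n then var (n - 1) else var n) M := by
  induction M generalizing k N with
  | var n => rfl
  | lam M ih =>
    simp only [subst, psubst, ih, lift_zero]
    congr 2
    funext n
    cases n with
    | zero => simp [upSubst, scons]
    | succ n => simp only [upSubst, scons, Function.comp_apply]; grind [rename]
  | app P Q ihP ihQ => simp only [subst, psubst, ihP, ihQ]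

theorem subst_zero (M N : Lam) : subst M 0 N = psubst (scons N var) M := by
  rw [subst_eq_psubst]
  congr 1
  funext n
  cases n <;> simp [scons]

theorem subst_zero_psubst_upSubst (σ : ℕ → Lam) (M N : Lam) :
    subst (psubst (upSubst σ) M) 0 N = psubst (scons N σ) M := by
  have h : psubst (scons N var) ∘ rename Nat.succ ∘ σ = σ :=
    funext fun n => (psubst_rename _ _ _).trans (psubst_var (σ n))
  rw [subst_zero, psubst_psubst, upSubst, comp_scons, h, psubst, scons]

theorem rename_subst_zero (ξ : ℕ → ℕ) (M N : Lam) :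
    rename ξ (subst M 0 N) = subst (rename (upRen ξ) M) 0 (rename ξ N) := by
  rw [subst_zero, subst_zero, rename_psubst, psubst_rename, comp_scons, upRen, comp_scons]
  rfl

/-! ### Head-normalizability -/

/-- Many-step β-reduction. -/
abbrev Reduces : Lam → Lam → Prop := ReflTransGen Beta

theorem Reduces.lam {M N : Lam} (h : Reduces M N) : Reduces (lam M) (lam N) :=
  ReflTransGen.lift Lam.lam (fun _ _ => .lam) _ _ h

theorem Reduces.appL {M N : Lam} (h : Reduces M N) (P : Lam) : Reduces (app M P) (app N P) :=
  ReflTransGen.lift (app · P) (fun _ _ => .appL) _ _ h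

theorem neutral_rename (ξ : ℕ → ℕ) (M : Lam) : neutral (rename ξ M) = neutral M := by
  induction M with
  | var n => rfl
  | lam _ _ => rfl
  | app _ _ ihP _ => exact ihP

theorem isHNF_of_neutral : ∀ {M : Lam}, neutral M = true → isHNF M
  | var _, _ => trivial
  | app _ _, h => h

theorem isHNF.rename {M : Lam} (h : isHNF M) (ξ : ℕ → ℕ) : isHNF (rename ξ M) := by
  induction M generalizing ξ with
  | var n => trivial
  | lam M ih => exact ih h _
  | app P _ _ _ => exact (neutral_rename ξ P).trans h

theorem Beta.rename {M N : Lam} (h : Beta M N) (ξ : ℕ → ℕ) : Beta (rename ξ M) (rename ξ N) := by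
  induction h generalizing ξ with
  | beta _ _ => exact rename_subst_zero ξ _ _ ▸ .beta _ _
  | lam _ ih => exact .lam (ih _)
  | appL _ ih => exact .appL (ih _)
  | appR _ ih => exact .appR (ih _)

theorem HeadNormalizable.of_isHNF {M : Lam} (h : isHNF M) : HeadNormalizable M :=
  ⟨M, .refl, h⟩

theorem HeadNormalizable.of_beta {M N : Lam} (h : Beta M N) :
    HeadNormalizable N → HeadNormalizable M :=
  fun ⟨P, hNP, hP⟩ => ⟨P, .head h hNP, hP⟩

theorem HeadNormalizable.lam {M : Lam} : HeadNormalizable M → HeadNormalizable (lam M) :=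
  fun ⟨N, hMN, hN⟩ => ⟨.lam N, Reduces.lam hMN, hN⟩

theorem HeadNormalizable.rename {M : Lam} (ξ : ℕ → ℕ) :
    HeadNormalizable M → HeadNormalizable (rename ξ M) :=
  fun ⟨_, hMN, hN⟩ => ⟨_, hMN.lift (Lam.rename ξ) fun _ _ h => h.rename ξ, hN.rename ξ⟩

/-! ### The graph model -/

/-- Intersection types, the points of the graph model: `arr S A` is the type
`(S 0 ∧ ⋯ ∧ S (n - 1)) → A`. Indexing a finite family by `Fin n` keeps the inductive type free of
nesting, so that recursion on types is structural. -/
inductive Ty : Type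
  | base : Ty
  | arr {n : ℕ} (S : Fin n → Ty) (A : Ty) : Ty

/-- The interpretation of a term in the graph model: the set of types it has when the variable `n`
has exactly the types in `ρ n`. -/
def interp : Lam → (ℕ → Set Ty) → Set Ty
  | var n, ρ => ρ n
  | lam M, ρ => {T | ∃ (n : ℕ) (S : Fin n → Ty) (A : Ty),
      T = .arr S A ∧ A ∈ interp M (scons (range S) ρ)}
  | app P Q, ρ => {A | ∃ (n : ℕ) (S : Fin n → Ty), .arr S A ∈ interp P ρ ∧ range S ⊆ interp Q ρ}

theorem arr_mem_interp_lam {M : Lam} {ρ : ℕ → Set Ty} {n : ℕ} {S : Fin n → Ty} {A : Ty} :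
    .arr S A ∈ interp (lam M) ρ ↔ A ∈ interp M (scons (range S) ρ) :=
  ⟨by rintro ⟨_, _, _, ⟨⟩, hA⟩; exact hA, fun hA => ⟨n, S, A, rfl, hA⟩⟩

theorem interp_rename (ξ : ℕ → ℕ) (M : Lam) (ρ : ℕ → Set Ty) :
    interp (rename ξ M) ρ = interp M (ρ ∘ ξ) := by
  induction M generalizing ξ ρ with
  | var n => rfl
  | lam M ih =>
    have h (X : Set Ty) : scons X ρ ∘ upRen ξ = scons X (ρ ∘ ξ) := comp_scons _ _ _
    simp only [rename, interp, ih, h]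
  | app P Q ihP ihQ => simp only [rename, interp, ihP, ihQ]

theorem interp_psubst (σ : ℕ → Lam) (M : Lam) (ρ : ℕ → Set Ty) :
    interp (psubst σ M) ρ = interp M fun n => interp (σ n) ρ := by
  induction M generalizing σ ρ with
  | var n => rfl
  | lam M ih =>
    have h (X : Set Ty) :
        (fun n => interp (upSubst σ n) (scons X ρ)) = scons X fun n => interp (σ n) ρ := by
      funext n
      cases n with
      | zero => rfl
      | succ n => exact interp_rename _ _ _
    simp only [psubst, interp, ih, h]
  | app P Q ihP ihQ => simp only [psubst, interp, ihP, ihQ]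

theorem interp_subst_zero (M N : Lam) (ρ : ℕ → Set Ty) :
    interp (subst M 0 N) ρ = interp M (scons (interp N ρ) ρ) := by
  rw [subst_zero, interp_psubst]
  exact congrArg _ (comp_scons (interp · ρ) N var)

theorem interp_mono (M : Lam) : Monotone (interp M) := by
  induction M with
  | var n => exact fun _ _ h => h n
  | lam M ih =>
    rintro ρ ρ' h _ ⟨n, S, A, rfl, hA⟩
    exact arr_mem_interp_lam.2 (ih (scons_le_scons le_rfl h) hA)
  | app P Q ihP ihQ =>
    rintro ρ ρ' h A ⟨n, S, hP, hQ⟩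
    exact ⟨n, S, ihP h hP, hQ.trans (ihQ h)⟩

theorem exists_finite_le_mem_interp {M : Lam} {ρ : ℕ → Set Ty} {A : Ty} (hA : A ∈ interp M ρ) :
    ∃ ρ' ≤ ρ, (∀ n, (ρ' n).Finite) ∧ A ∈ interp M ρ' := by
  induction M generalizing ρ A with
  | var n =>
    refine ⟨fun m => {B | B = A ∧ m = n}, ?_, fun m => ?_, rfl, rfl⟩
    · rintro m B ⟨rfl, rfl⟩
      exact hA
    · exact (finite_singleton A).subset fun _ h => h.1
  | lam M ih =>
    obtain ⟨n, S, A, rfl, hA⟩ := hA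
    obtain ⟨ρ', hle, hfin, hA⟩ := ih hA
    refine ⟨ρ' ∘ Nat.succ, fun n => hle (n + 1), fun n => hfin (n + 1), arr_mem_interp_lam.2 ?_⟩
    refine interp_mono M (fun n => ?_) hA
    cases n with
    | zero => exact hle 0
    | succ n => exact le_rfl
  | app P Q ihP ihQ =>
    obtain ⟨n, S, hP, hQ⟩ := hA
    obtain ⟨ρP, hPle, hPfin, hP⟩ := ihP hP
    choose ρQ hQle hQfin hQ using fun i => ihQ (hQ (mem_range_self i))
    refine ⟨ρP ⊔ ⨆ i, ρQ i, sup_le hPle (iSup_le hQle), fun m => ?_,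
      n, S, interp_mono P le_sup_left hP, range_subset_iff.2 fun i => ?_⟩
    · rw [Pi.sup_apply, iSup_apply]
      exact (hPfin m).union (finite_iUnion fun i => hQfin i m)
    · exact interp_mono Q (le_sup_of_le_right (le_iSup ρQ i)) (hQ i)

theorem interp_app_lam (M N : Lam) (ρ : ℕ → Set Ty) :
    interp (app (lam M) N) ρ = interp M (scons (interp N ρ) ρ) := by
  ext A
  constructor
  · rintro ⟨n, S, hM, hN⟩
    exact interp_mono M (scons_le_scons hN le_rfl) (arr_mem_interp_lam.1 hM)
  · intro hA
    obtain ⟨ρ', hle, hfin, hA⟩ := exists_finite_le_mem_interp hA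
    obtain ⟨n, S, -, hS⟩ := (hfin 0).fin_param
    refine ⟨n, S, arr_mem_interp_lam.2 (interp_mono M (fun m => ?_) hA), hS.trans_subset (hle 0)⟩
    cases m with
    | zero => exact hS.ge
    | succ m => exact hle (m + 1)

theorem Beta.interp_eq {M N : Lam} (h : Beta M N) : interp M = interp N := by
  induction h with
  | beta M N => funext ρ; rw [interp_app_lam, interp_subst_zero]
  | lam _ ih => simp only [interp, ih]
  | appL _ ih => simp only [interp, ih]
  | appR _ ih => simp only [interp, ih]

/-- A term is typable if it has a type in some environment. -/
def Typable (M : Lam) : Prop := ∃ ρ, (interp M ρ).Nonempty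

theorem typable_ident : Typable Ident :=
  ⟨fun _ => ∅, .arr (fun _ : Fin 1 => .base) .base, arr_mem_interp_lam.2 ⟨0, rfl⟩⟩

theorem typable_iff_of_eqvGen {M N : Lam} (h : EqvGen Beta M N) : Typable M ↔ Typable N := by
  have hinterp : interp M = interp N :=
    congrArg (Quot.lift interp fun _ _ => Beta.interp_eq) (Quot.eqvGen_sound h)
  rw [Typable, Typable, hinterp]

theorem Typable.of_lam {M : Lam} : Typable (lam M) → Typable M :=
  fun ⟨_, _, _, _, A, _, hA⟩ => ⟨_, A, hA⟩

theorem Typable.of_app {M N : Lam} : Typable (app M N) → Typable M :=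
  fun ⟨_, _, _, _, hM, _⟩ => ⟨_, _, hM⟩

theorem Typable.of_iterate_lam {k : ℕ} {M : Lam} (h : Typable (Lam.lam^[k] M)) : Typable M := by
  induction k generalizing M with
  | zero => exact h
  | succ _ ih => exact (ih h).of_lam

theorem Typable.of_mkApps {M : Lam} {Ns : List Lam} (h : Typable (mkApps M Ns)) : Typable M := by
  induction Ns generalizing M with
  | nil => exact h
  | cons _ _ ih => exact (ih h).of_app

/-! ### Realizability -/

section Realizability

variable {M : Lam} {ρ : ℕ → Set Ty} {σ : ℕ → Lam} {A : Ty}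

/-- The realizability interpretation of types. The arrow clause ranges over all renamings of `M`,
as in a Kripke model, which makes realizability stable under renaming. -/
def Realizes : Ty → Lam → Prop
  | .base, M => HeadNormalizable M
  | .arr S A, M => HeadNormalizable M ∧
      ∀ ξ N, (∀ i, Realizes (S i) N) → Realizes A (app (rename ξ M) N)

theorem Realizes.headNormalizable : ∀ {A : Ty}, Realizes A M → HeadNormalizable M
  | .base, h => h
  | .arr _ _, h => h.1

theorem Realizes.rename (h : Realizes A M) (ξ : ℕ → ℕ) : Realizes A (rename ξ M) := by
  cases A with
  | base => exact HeadNormalizable.rename ξ h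
  | arr S A =>
    refine ⟨h.1.rename ξ, fun ζ N hN => ?_⟩
    rw [rename_rename]
    exact h.2 _ N hN

theorem Realizes.of_beta {M' : Lam} (hM : Beta M M') (h : Realizes A M') : Realizes A M := by
  induction A generalizing M M' with
  | base => exact HeadNormalizable.of_beta hM h
  | arr S A _ ih =>
    exact ⟨.of_beta hM h.1, fun ξ N hN => ih (.appL (hM.rename ξ)) (h.2 ξ N hN)⟩

theorem Realizes.of_neutral (h : neutral M = true) : Realizes A M := by
  induction A generalizing M with
  | base => exact .of_isHNF (isHNF_of_neutral h)
  | arr S A _ ih =>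
    exact ⟨.of_isHNF (isHNF_of_neutral h), fun ξ N _ => ih ((neutral_rename ξ M).trans h)⟩

/-- The substitution `σ` realizes the environment `ρ`: `σ n` realizes every type in `ρ n`. -/
def RealizesEnv (ρ : ℕ → Set Ty) (σ : ℕ → Lam) : Prop := ∀ n, ∀ A ∈ ρ n, Realizes A (σ n)

theorem RealizesEnv.rename (h : RealizesEnv ρ σ) (ξ : ℕ → ℕ) : RealizesEnv ρ (rename ξ ∘ σ) :=
  fun n A hA => (h n A hA).rename ξ

theorem RealizesEnv.scons {n : ℕ} {S : Fin n → Ty} {N : Lam} (h : RealizesEnv ρ σ)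
    (hN : ∀ i, Realizes (S i) N) : RealizesEnv (scons (range S) ρ) (scons N σ)
  | 0 => forall_mem_range.2 hN
  | n + 1 => h n

theorem realizes_psubst (hA : A ∈ interp M ρ) (hσ : RealizesEnv ρ σ) :
    Realizes A (psubst σ M) := by
  induction M generalizing ρ σ A with
  | var n => exact hσ n A hA
  | lam M ih =>
    obtain ⟨n, S, A, rfl, hA⟩ := hA
    constructor
    · have hup : RealizesEnv (Lam.scons (range S) ρ) (upSubst σ) :=
        (hσ.rename Nat.succ).scons fun _ => .of_neutral rfl
      exact (ih hA hup).headNormalizable.lam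
    · intro ξ N hN
      rw [rename_psubst]
      refine .of_beta (.beta _ _) ?_
      rw [subst_zero_psubst_upSubst]
      exact ih hA ((hσ.rename ξ).scons hN)
  | app P Q ihP ihQ =>
    obtain ⟨n, S, hP, hQ⟩ := hA
    have h := (ihP hP hσ).2 id (psubst σ Q) fun i => ihQ (hQ (mem_range_self i)) hσ
    rwa [rename_id] at h

theorem Typable.headNormalizable : Typable M → HeadNormalizable M := by
  rintro ⟨ρ, A, hA⟩
  have h : Realizes A (psubst var M) := realizes_psubst hA fun _ _ _ => .of_neutral rfl
  rw [psubst_var] at h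
  exact h.headNormalizable

end Realizability

/-! ### Solving head-normal forms -/

theorem ClosedAt.mono {M : Lam} {d e : ℕ} (hM : ClosedAt d M) (h : d ≤ e) : ClosedAt e M := by
  induction M generalizing d e with
  | var n => exact lt_of_lt_of_le hM h
  | lam M ih => exact ih hM (Nat.succ_le_succ h)
  | app P Q ihP ihQ => exact ⟨ihP hM.1 h, ihQ hM.2 h⟩

theorem exists_closedAt (M : Lam) : ∃ d, ClosedAt d M := by
  induction M with
  | var n => exact ⟨n + 1, n.lt_succ_self⟩
  | lam M ih =>
    obtain ⟨d, hM⟩ := ih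
    exact ⟨d, hM.mono d.le_succ⟩
  | app P Q ihP ihQ =>
    obtain ⟨d, hP⟩ := ihP
    obtain ⟨e, hQ⟩ := ihQ
    exact ⟨max d e, hP.mono (le_max_left d e), hQ.mono (le_max_right d e)⟩

theorem closedAt_iterate_lam_iff {k d : ℕ} {M : Lam} :
    ClosedAt d (Lam.lam^[k] M) ↔ ClosedAt (d + k) M := by
  induction k generalizing M with
  | zero => rfl
  | succ _ ih => exact ih

theorem mkApps_concat (M : Lam) (Ns : List Lam) (N : Lam) :
    mkApps M (Ns ++ [N]) = app (mkApps M Ns) N :=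
  List.foldl_concat ..

theorem psubst_mkApps (σ : ℕ → Lam) (M : Lam) (Ns : List Lam) :
    psubst σ (mkApps M Ns) = mkApps (psubst σ M) (Ns.map (psubst σ)) := by
  induction Ns generalizing M with
  | nil => rfl
  | cons N _ ih => exact ih (app M N)

theorem exists_eq_mkApps_of_neutral {M : Lam} (h : neutral M = true) :
    ∃ i Ns, M = mkApps (var i) Ns := by
  induction M with
  | var i => exact ⟨i, [], rfl⟩
  | lam M _ => cases h
  | app P Q ihP _ =>
    obtain ⟨i, Ns, rfl⟩ := ihP h
    exact ⟨i, Ns ++ [Q], (mkApps_concat _ _ _).symm⟩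

theorem isHNF.exists_eq_iterate_lam_mkApps {M : Lam} (h : isHNF M) :
    ∃ m i Ns, M = Lam.lam^[m] (mkApps (var i) Ns) := by
  induction M with
  | var i => exact ⟨0, i, [], rfl⟩
  | lam M ih =>
    obtain ⟨m, i, Ns, rfl⟩ := ih h
    exact ⟨m + 1, i, Ns, (Function.iterate_succ_apply' _ _ _).symm⟩
  | app _ _ _ _ => exact ⟨0, exists_eq_mkApps_of_neutral h⟩

theorem Reduces.mkApps {M N : Lam} (h : Reduces M N) (Ps : List Lam) :
    Reduces (mkApps M Ps) (mkApps N Ps) := by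
  induction Ps generalizing M N with
  | nil => exact h
  | cons P _ ih => exact ih (h.appL P)

theorem Reduces.iterate_lam {M N : Lam} (h : Reduces M N) (k : ℕ) :
    Reduces (Lam.lam^[k] M) (Lam.lam^[k] N) := by
  induction k generalizing M N with
  | zero => exact h
  | succ _ ih => exact ih h.lam

/-- The simultaneous substitution performed by applying `λx₁…λxₘ.M` to the list `N₁, …, Nₘ`. The
last argument comes first, since de Bruijn indices count binders from the inside. -/
def argSubst (Ns : List Lam) : ℕ → Lam := Ns.foldl (fun σ N => scons N σ) var

theorem argSubst_concat (Ns : List Lam) (N : Lam) :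
    argSubst (Ns ++ [N]) = scons N (argSubst Ns) :=
  List.foldl_concat ..

theorem argSubst_mem {Ns : List Lam} {i : ℕ} (hi : i < Ns.length) : argSubst Ns i ∈ Ns := by
  induction Ns using List.reverseRecOn generalizing i with
  | nil => cases hi
  | append_singleton Ns N ih =>
    rw [argSubst_concat, List.mem_append, List.mem_singleton]
    cases i with
    | zero => exact .inr rfl
    | succ i => exact .inl (ih (by simpa using hi))

theorem mkApps_iterate_lam_reduces_psubst (M : Lam) (Ns : List Lam) :
    Reduces (mkApps (Lam.lam^[Ns.length] M) Ns) (psubst (argSubst Ns) M) := by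
  induction Ns using List.reverseRecOn generalizing M with
  | nil => exact (psubst_var M).symm ▸ .refl
  | append_singleton Ns N ih =>
    rw [List.length_append, List.length_singleton, Function.iterate_succ_apply, mkApps_concat,
      argSubst_concat, ← subst_zero_psubst_upSubst]
    exact ((ih (lam M)).appL N).tail (.beta _ _)

theorem mkApps_iterate_lam_ident_reduces (Ns : List Lam) :
    Reduces (mkApps (Lam.lam^[Ns.length] Ident) Ns) Ident :=
  mkApps_iterate_lam_reduces_psubst Ident Ns

theorem mkApps_hnf_reduces_ident {m i : ℕ} (hi : i < m) (Ns : List Lam) :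
    Reduces (mkApps (Lam.lam^[m] (mkApps (var i) Ns))
      (List.replicate m (Lam.lam^[Ns.length] Ident))) Ident := by
  set Us := List.replicate m (Lam.lam^[Ns.length] Ident)
  have hlen : Us.length = m := List.length_replicate
  have hhead : argSubst Us i = Lam.lam^[Ns.length] Ident :=
    List.eq_of_mem_replicate (argSubst_mem (hlen.symm ▸ hi))
  have hfeed := mkApps_iterate_lam_reduces_psubst (mkApps (var i) Ns) Us
  have hdiscard := mkApps_iterate_lam_ident_reduces (Ns.map (psubst (argSubst Us)))
  rw [hlen, psubst_mkApps, psubst, hhead] at hfeed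
  rw [List.length_map] at hdiscard
  exact hfeed.trans hdiscard

theorem Solvable.typable {M : Lam} : Solvable M → Typable M :=
  fun ⟨_, _, _, h⟩ => ((typable_iff_of_eqvGen h).2 typable_ident).of_mkApps.of_iterate_lam

theorem HeadNormalizable.solvable {M : Lam} (h : HeadNormalizable M) : Solvable M := by
  obtain ⟨N, hMN, hN⟩ := h
  obtain ⟨m, i, Ns, rfl⟩ := hN.exists_eq_iterate_lam_mkApps
  obtain ⟨d, hd⟩ := exists_closedAt M
  obtain ⟨k, hdk, hik⟩ : ∃ k, d ≤ k ∧ i < k := ⟨max d (i + 1), by omega, by omega⟩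
  have hclosed : ClosedAt 0 (Lam.lam^[k] M) := closedAt_iterate_lam_iff.2 (hd.mono (by omega))
  have hred : Reduces (Lam.lam^[k] M) (Lam.lam^[k + m] (mkApps (var i) Ns)) :=
    Function.iterate_add_apply Lam.lam k m _ ▸ Reduces.iterate_lam hMN k
  have hsolve := (hred.mkApps _).trans (mkApps_hnf_reduces_ident (by omega) Ns)
  exact ⟨k, hclosed, _, EqvGen.reflTransGen_le_eqvGen _ _ _ hsolve⟩

end Lam

/-- `M` is solvable iff `M` is head-normalizable. -/
theorem solvable_iff_head_normalizable (M : Lam) :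
    Lam.Solvable M ↔ Lam.HeadNormalizable M := by
  exact ⟨fun h => h.typable.headNormalizable, fun h => h.solvable⟩
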